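/- For every f ∈ L¹(Ω,μ) one has: (i) ∫_{Ω+} f(x) dμ(x) = ∫_{Γ+} ( ∫_0^{τ−(y)} f(Φ(y,−s)) ds ) dμ+(y) and ∫_{Ω−} f(x) dμ(x) = ∫_{Γ−} ( ∫_0^{τ+(y)} f(Φ(y,s)) ds ) dμ−(y); and (ii) ∫_{Ω+ ∩ Ω−∞} f(x) dμ(x) = ∫_{Γ+∞} ( ∫_0^∞ f(Φ(y,−s)) ds ) dμ+(y) and ∫_{Ω− ∩ Ω+∞} f(x) dμ(x) = ∫_{Γ−∞} ( ∫_0^∞ f(Φ(y,s)) ds ) dμ−(y). -/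

import Mathlib

/-!
The hypothesis `BealsProperty` integrates space-time functions along the lifted characteristics
`s ↦ (Φ(y,s), t+s)`. The theorem removes the time variable.

For a function `g` carried by the points of `Ω` that exit within one time unit (`τ₊ ≤ 1`), insert
`g(x) 1_{1 < t + τ₊(x) < 2}` on `Ω × (0,2)`. Since `t + τ₊` is constant along lifted
characteristics, both sides can be evaluated exactly, and the term over `Ω` on the right vanishes.
The result is `∫_Ω g dμ = ∫_{Γ₊} (∫_0^{τ₋(y)} g(Φ(y,-s)) ds) dμ₊(y)` (`integral_of_near_exit`).

A general `f` is replaced by `g(x) = w(x) ∫_{orbit of x} f`, where the weight `w ≥ 0`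
(`exitWeight`) is carried by `{τ₊ ≤ 1}` and has integral one along every orbit that leaves `Ω`.
For each `y ∈ Γ₊` the functions `g` and `f` have the same integral along the curve ending at `y`.
They also satisfy `∫_Ω g dμ = ∫_{Ω₊} f dμ`, by Fubini's theorem and the invariance of `dr ⊗ μ`
under `(r, x) ↦ (-r, Φ(x,r))` (`integral_concentrate`). Together these give the outgoing identity
`outgoing_integral`. No truncation or passage to the limit is involved, so that neither
σ-finiteness of `μ±` nor integrability over `Γ±` has to be known beforehand.

The identity on `{τ₋ = ∞}` is the one for `f 1_{τ₋ = ∞}`, because finiteness of `τ₋` does not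
change along a curve. The incoming identities are the outgoing ones for the time-reversed flow;
the substitution `t ↦ T - t` exchanges the two halves of `BealsProperty` (`outBeals_rev`).
-/

open MeasureTheory Set Filter Topology
open scoped ENNReal NNReal

noncomputable section

/-- Forward exit time of the flow `Φ` from `Ω` (`∞` if the forward curve never leaves `Ω`). -/
def tauP {N : ℕ} (Ω : Set (Fin N → ℝ)) (Φ : (Fin N → ℝ) → ℝ → (Fin N → ℝ))
    (x : Fin N → ℝ) : ℝ≥0∞ :=
  sInf {s : ℝ≥0∞ | ∃ r : ℝ, 0 < r ∧ s = ENNReal.ofReal r ∧ Φ x r ∉ Ω}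

/-- Backward exit time of the flow `Φ` from `Ω`. -/
def tauM {N : ℕ} (Ω : Set (Fin N → ℝ)) (Φ : (Fin N → ℝ) → ℝ → (Fin N → ℝ))
    (x : Fin N → ℝ) : ℝ≥0∞ :=
  sInf {s : ℝ≥0∞ | ∃ r : ℝ, 0 < r ∧ s = ENNReal.ofReal r ∧ Φ x (-r) ∉ Ω}

/-- `∫_0^τ g(s) ds`, over `(0,∞)` when `τ = ∞`. -/
def curveInt (g : ℝ → ℝ) (τ : ℝ≥0∞) : ℝ :=
  ∫ s in {s : ℝ | 0 < s ∧ ENNReal.ofReal s < τ}, g s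

/-- The incoming part `Γ₋` of the boundary `∂Ω`. -/
def GammaM {N : ℕ} (Ω : Set (Fin N → ℝ)) (Φ : (Fin N → ℝ) → ℝ → (Fin N → ℝ)) :
    Set (Fin N → ℝ) :=
  {y ∈ frontier Ω | ∃ x ∈ Ω, tauM Ω Φ x < ⊤ ∧ y = Φ x (-(tauM Ω Φ x).toReal)}

/-- The outgoing part `Γ₊` of the boundary `∂Ω`. -/
def GammaP {N : ℕ} (Ω : Set (Fin N → ℝ)) (Φ : (Fin N → ℝ) → ℝ → (Fin N → ℝ)) :
    Set (Fin N → ℝ) :=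
  {y ∈ frontier Ω | ∃ x ∈ Ω, tauP Ω Φ x < ⊤ ∧ y = Φ x ((tauP Ω Φ x).toReal)}

/-- The boundary measures `μ∓` satisfy the integration-along-characteristics identities. -/
def IsBoundaryMeasures {N : ℕ} (Ω : Set (Fin N → ℝ)) (Φ : (Fin N → ℝ) → ℝ → (Fin N → ℝ))
    (μ μm μp : Measure (Fin N → ℝ)) : Prop :=
  ∀ f : (Fin N → ℝ) → ℝ, Integrable f (μ.restrict Ω) →
    (∫ x in {x ∈ Ω | tauM Ω Φ x < ⊤}, f x ∂μ
        = ∫ y in GammaM Ω Φ, curveInt (fun s => f (Φ y s)) (tauP Ω Φ y) ∂μm) ∧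
    (∫ x in {x ∈ Ω | tauP Ω Φ x < ⊤}, f x ∂μ
        = ∫ y in GammaP Ω Φ, curveInt (fun s => f (Φ y (-s))) (tauM Ω Φ y) ∂μp)

/-- The identities of Lemma `defmu+-` (beals1 and beals2). -/
def BealsProperty {N : ℕ} (Ω : Set (Fin N → ℝ)) (Φ : (Fin N → ℝ) → ℝ → (Fin N → ℝ))
    (μ μm μp : Measure (Fin N → ℝ)) : Prop :=
  ∀ T : ℝ, 0 < T → ∀ f : ((Fin N → ℝ) × ℝ) → ℝ,
    Integrable f ((μ.restrict Ω).prod (volume.restrict (Ioo (0 : ℝ) T))) →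
    (∫ p, f p ∂((μ.restrict Ω).prod (volume.restrict (Ioo (0 : ℝ) T)))
        = (∫ t in Ioo (0 : ℝ) T, (∫ y in GammaP Ω Φ,
            (∫ s in Ioo (0 : ℝ) ((tauM Ω Φ y ⊓ ENNReal.ofReal t).toReal),
              f (Φ y (-s), t - s)) ∂μp))
          + ∫ x in Ω, (∫ s in Ioo (0 : ℝ) ((tauM Ω Φ x ⊓ ENNReal.ofReal T).toReal),
              f (Φ x (-s), T - s)) ∂μ)
    ∧ (∫ p, f p ∂((μ.restrict Ω).prod (volume.restrict (Ioo (0 : ℝ) T)))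
        = (∫ t in Ioo (0 : ℝ) T, (∫ y in GammaM Ω Φ,
            (∫ s in Ioo (0 : ℝ) ((tauP Ω Φ y ⊓ ENNReal.ofReal (T - t)).toReal),
              f (Φ y s, t + s)) ∂μm))
          + ∫ x in Ω, (∫ s in Ioo (0 : ℝ) ((tauP Ω Φ x ⊓ ENNReal.ofReal T).toReal),
              f (Φ x s, s)) ∂μ)

/-- The class `𝔜` of test functions, together with the derivative `Dψ` along the flow. -/
structure IsTestFun {N : ℕ} (Ω : Set (Fin N → ℝ)) (Φ : (Fin N → ℝ) → ℝ → (Fin N → ℝ))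
    (ψ Dψ : (Fin N → ℝ) → ℝ) : Prop where
  measurable : Measurable ψ
  bounded : ∃ C, ∀ x, |ψ x| ≤ C
  compact_support : ∃ K : Set (Fin N → ℝ), IsCompact K ∧ K ⊆ Ω ∧ ∀ x ∉ K, ψ x = 0
  smooth : ∀ x ∈ Ω, ContDiffOn ℝ 1 (fun s => ψ (Φ x s))
      {s : ℝ | ENNReal.ofReal s < tauP Ω Φ x ∧ ENNReal.ofReal (-s) < tauM Ω Φ x}
  hasDeriv : ∀ x ∈ Ω, HasDerivAt (fun s => ψ (Φ x s)) (Dψ x) 0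
  measurableD : Measurable Dψ
  boundedD : ∃ C, ∀ x, |Dψ x| ≤ C

/-- `f ∈ D(T_max)` with `T_max f = g`. -/
def InDomTmax {N : ℕ} (Ω : Set (Fin N → ℝ)) (Φ : (Fin N → ℝ) → ℝ → (Fin N → ℝ))
    (μ : Measure (Fin N → ℝ)) (f g : (Fin N → ℝ) → ℝ) : Prop :=
  Integrable f (μ.restrict Ω) ∧ Integrable g (μ.restrict Ω) ∧
    ∀ ψ Dψ : (Fin N → ℝ) → ℝ, IsTestFun Ω Φ ψ Dψ →
      ∫ x in Ω, g x * ψ x ∂μ = ∫ x in Ω, f x * Dψ x ∂μ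

/-- A sequence of one-dimensional mollifiers supported in `[0, 1/n]`. -/
def IsMollifier (ρ : ℕ → ℝ → ℝ) : Prop :=
  ∀ n : ℕ, ContDiff ℝ (⊤ : ℕ∞) (ρ n) ∧ (∀ s, 0 ≤ ρ n s) ∧
    (∀ s, s ∉ Icc (0 : ℝ) (1 / (n + 1 : ℝ)) → ρ n s = 0) ∧ (∫ s, ρ n s) = 1

/-- Mollification along the characteristic curves. -/
def moll {N : ℕ} (Ω : Set (Fin N → ℝ)) (Φ : (Fin N → ℝ) → ℝ → (Fin N → ℝ))
    (ρ : ℝ → ℝ) (f : (Fin N → ℝ) → ℝ) (x : Fin N → ℝ) : ℝ :=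
  curveInt (fun s => ρ s * f (Φ x (-s))) (tauM Ω Φ x)

/-- The lifted flow `Ψ(ξ,s) = (Φ(ξ₁,s), ξ₂+s)` on `Ω × (0,T)`. -/
def lflow {N : ℕ} (Φ : (Fin N → ℝ) → ℝ → (Fin N → ℝ)) (ξ : (Fin N → ℝ) × ℝ) (s : ℝ) :
    (Fin N → ℝ) × ℝ := (Φ ξ.1 s, ξ.2 + s)

/-- Forward exit time `ℓ₊` of the lifted flow. -/
def ellP {N : ℕ} (Ω : Set (Fin N → ℝ)) (Φ : (Fin N → ℝ) → ℝ → (Fin N → ℝ)) (T : ℝ)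
    (ξ : (Fin N → ℝ) × ℝ) : ℝ≥0∞ := tauP Ω Φ ξ.1 ⊓ ENNReal.ofReal (T - ξ.2)

/-- Backward exit time `ℓ₋` of the lifted flow. -/
def ellM {N : ℕ} (Ω : Set (Fin N → ℝ)) (Φ : (Fin N → ℝ) → ℝ → (Fin N → ℝ))
    (ξ : (Fin N → ℝ) × ℝ) : ℝ≥0∞ := tauM Ω Φ ξ.1 ⊓ ENNReal.ofReal ξ.2

/-- The incoming part `Σ₋,T` of the boundary of `Ω × (0,T)`. -/
def SigmaM {N : ℕ} (Ω : Set (Fin N → ℝ)) (Φ : (Fin N → ℝ) → ℝ → (Fin N → ℝ)) (T : ℝ) :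
    Set ((Fin N → ℝ) × ℝ) :=
  {ζ ∈ frontier (Ω ×ˢ Ioo (0 : ℝ) T) |
    ∃ ξ ∈ Ω ×ˢ Ioo (0 : ℝ) T, ζ = lflow Φ ξ (-(ellM Ω Φ ξ).toReal)}

/-- The outgoing part `Σ₊,T` of the boundary of `Ω × (0,T)`. -/
def SigmaP {N : ℕ} (Ω : Set (Fin N → ℝ)) (Φ : (Fin N → ℝ) → ℝ → (Fin N → ℝ)) (T : ℝ) :
    Set ((Fin N → ℝ) × ℝ) :=
  {ζ ∈ frontier (Ω ×ˢ Ioo (0 : ℝ) T) |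
    ∃ ξ ∈ Ω ×ˢ Ioo (0 : ℝ) T, ζ = lflow Φ ξ ((ellP Ω Φ T ξ).toReal)}

/-- The semigroup `U₀(t)` with no re-entry boundary conditions. -/
def U0 {N : ℕ} (Ω : Set (Fin N → ℝ)) (Φ : (Fin N → ℝ) → ℝ → (Fin N → ℝ)) (t : ℝ)
    (f : (Fin N → ℝ) → ℝ) (x : Fin N → ℝ) : ℝ :=
  if ENNReal.ofReal t < tauM Ω Φ x then f (Φ x (-t)) else 0

/-- `x ↦ ∫_0^{τ₋(x)} e^{-λ t} g(Φ(x,-t)) dt`. -/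
def resolv {N : ℕ} (Ω : Set (Fin N → ℝ)) (Φ : (Fin N → ℝ) → ℝ → (Fin N → ℝ)) (lam : ℝ)
    (g : (Fin N → ℝ) → ℝ) (x : Fin N → ℝ) : ℝ :=
  curveInt (fun t => Real.exp (-(lam * t)) * g (Φ x (-t))) (tauM Ω Φ x)

/-- The candidate solution of the boundary value problem `(λ - T_max) f = g`, `B⁻ f = u`. -/
def bvpSol {N : ℕ} (Ω : Set (Fin N → ℝ)) (Φ : (Fin N → ℝ) → ℝ → (Fin N → ℝ)) (lam : ℝ)
    (g u : (Fin N → ℝ) → ℝ) (x : Fin N → ℝ) : ℝ :=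
  resolv Ω Φ lam g x +
    (if tauM Ω Φ x < ⊤ then
      Real.exp (-(lam * (tauM Ω Φ x).toReal)) * u (Φ x (-(tauM Ω Φ x).toReal)) else 0)

/-- `f` has incoming trace `u` on `Γ₋`, via an absolutely continuous representative
(along the characteristics, with derivative `-g`). -/
def IsTraceM {N : ℕ} (Ω : Set (Fin N → ℝ)) (Φ : (Fin N → ℝ) → ℝ → (Fin N → ℝ))
    (μ μm : Measure (Fin N → ℝ)) (f g u : (Fin N → ℝ) → ℝ) : Prop :=
  ∃ fs : (Fin N → ℝ) → ℝ, fs =ᵐ[μ.restrict Ω] f ∧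
    (∀ᵐ x ∂μ.restrict Ω, ∀ t₁ t₂ : ℝ, t₁ ≤ t₂ →
      ENNReal.ofReal (-t₁) < tauM Ω Φ x → ENNReal.ofReal t₂ < tauP Ω Φ x →
      fs (Φ x t₁) - fs (Φ x t₂) = ∫ s in t₁..t₂, g (Φ x s)) ∧
    ∀ᵐ y ∂μm.restrict (GammaM Ω Φ),
      Tendsto (fun t => fs (Φ y t)) (𝓝[>] (0 : ℝ)) (𝓝 (u y))

/-- `f` has outgoing trace `w` on `Γ₊`. -/
def IsTraceP {N : ℕ} (Ω : Set (Fin N → ℝ)) (Φ : (Fin N → ℝ) → ℝ → (Fin N → ℝ))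
    (μ μp : Measure (Fin N → ℝ)) (f g w : (Fin N → ℝ) → ℝ) : Prop :=
  ∃ fs : (Fin N → ℝ) → ℝ, fs =ᵐ[μ.restrict Ω] f ∧
    (∀ᵐ x ∂μ.restrict Ω, ∀ t₁ t₂ : ℝ, t₁ ≤ t₂ →
      ENNReal.ofReal (-t₁) < tauM Ω Φ x → ENNReal.ofReal t₂ < tauP Ω Φ x →
      fs (Φ x t₁) - fs (Φ x t₂) = ∫ s in t₁..t₂, g (Φ x s)) ∧
    ∀ᵐ y ∂μp.restrict (GammaP Ω Φ),
      Tendsto (fun t => fs (Φ y (-t))) (𝓝[>] (0 : ℝ)) (𝓝 (w y))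

/-! ### The flow and its exit times -/

/-- `Φ` is a continuous one-parameter group of transformations. -/
structure IsContFlow {N : ℕ} (Φ : (Fin N → ℝ) → ℝ → (Fin N → ℝ)) : Prop where
  zero : ∀ x, Φ x 0 = x
  add : ∀ x s t, Φ (Φ x s) t = Φ x (s + t)
  cont : Continuous fun p : (Fin N → ℝ) × ℝ => Φ p.1 p.2

/-- The time-reversed flow. It exchanges the roles of `tauP` and `tauM`, and of `GammaP` and
`GammaM`. -/
def revFlow {N : ℕ} (Φ : (Fin N → ℝ) → ℝ → (Fin N → ℝ)) : (Fin N → ℝ) → ℝ → (Fin N → ℝ) :=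
  fun x s => Φ x (-s)

section Flow

variable {N : ℕ} {Ω : Set (Fin N → ℝ)} {Φ : (Fin N → ℝ) → ℝ → (Fin N → ℝ)}

theorem IsContFlow.rev (h : IsContFlow Φ) : IsContFlow (revFlow Φ) where
  zero x := by simp [revFlow, h.zero]
  add x s t := by simp only [revFlow, h.add]; congr 1; ring
  cont := h.cont.comp (continuous_fst.prodMk continuous_snd.neg)

theorem tauP_rev (x : Fin N → ℝ) : tauP Ω (revFlow Φ) x = tauM Ω Φ x := rfl

theorem tauM_rev (x : Fin N → ℝ) : tauM Ω (revFlow Φ) x = tauP Ω Φ x := by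
  simp [tauM, tauP, revFlow]

theorem gammaP_rev : GammaP Ω (revFlow Φ) = GammaM Ω Φ := rfl

/-- Gronwall's inequality makes the flow Lipschitz in the initial point, locally uniformly in
time, which together with uniqueness of solutions gives a continuous group. -/
theorem isContFlow_of_ode {κ : ℝ≥0} {F : (Fin N → ℝ) → (Fin N → ℝ)} (hF : LipschitzWith κ F)
    (hΦ0 : ∀ x, Φ x 0 = x) (hΦ' : ∀ x s, HasDerivAt (Φ x) (F (Φ x s)) s) : IsContFlow Φ := by
  have hc : ∀ x, Continuous (Φ x) := fun x =>
    continuous_iff_continuousAt.2 fun s => (hΦ' x s).continuousAt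
  have key : ∀ G : (Fin N → ℝ) → (Fin N → ℝ), LipschitzWith κ G → ∀ u v : ℝ → (Fin N → ℝ),
      (∀ s, HasDerivAt u (G (u s)) s) → (∀ s, HasDerivAt v (G (v s)) s) →
      ∀ t, 0 ≤ t → dist (u t) (v t) ≤ dist (u 0) (v 0) * Real.exp (κ * t) := by
    intro G hG u v hu hv t ht
    have := dist_le_of_trajectories_ODE (v := fun _ => G) (K := κ) (f := u) (g := v) (a := 0)
      (b := t) (δ := dist (u 0) (v 0)) (fun _ => hG)
      (fun s _ => (hu s).continuousAt.continuousWithinAt)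
      (fun s _ => (hu s).hasDerivWithinAt)
      (fun s _ => (hv s).continuousAt.continuousWithinAt)
      (fun s _ => (hv s).hasDerivWithinAt) le_rfl t ⟨ht, le_rfl⟩
    simpa using this
  have hrev : ∀ x s, HasDerivAt (fun r => Φ x (-r)) (-F (Φ x (-s))) s := by
    intro x s
    have := (hΦ' x (-s)).scomp s (hasDerivAt_neg s)
    simpa [Function.comp_def] using this
  have hd : ∀ x y t, dist (Φ x t) (Φ y t) ≤ dist x y * Real.exp (κ * |t|) := by
    intro x y t
    rcases le_total 0 t with ht | ht
    · have := key F hF (Φ x) (Φ y) (hΦ' x) (hΦ' y) t ht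
      rwa [hΦ0, hΦ0, show κ * t = κ * |t| by rw [abs_of_nonneg ht]] at this
    · have := key (fun z => -F z) hF.neg (fun r => Φ x (-r)) (fun r => Φ y (-r)) (hrev x) (hrev y)
        (-t) (by linarith)
      simpa [hΦ0, abs_of_nonpos ht] using this
  refine ⟨hΦ0, ?_, ?_⟩
  · intro x s t
    have := ODE_solution_unique_univ (v := fun _ => F) (s := fun _ => univ) (K := κ)
      (f := fun r => Φ (Φ x s) r) (g := fun r => Φ x (s + r)) (t₀ := 0)
      (fun _ => hF.lipschitzOnWith) (fun r => ⟨hΦ' _ r, mem_univ _⟩)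
      (fun r => ⟨(hΦ' x (s + r)).comp_const_add s r, mem_univ _⟩) (by simp [hΦ0])
    exact congrFun this t
  · rw [continuous_iff_continuousAt]
    rintro ⟨x, t⟩
    rw [ContinuousAt, tendsto_iff_dist_tendsto_zero]
    have h1 : Tendsto (fun p : (Fin N → ℝ) × ℝ =>
        dist p.1 x * Real.exp (κ * |p.2|) + dist (Φ x p.2) (Φ x t)) (𝓝 (x, t)) (𝓝 0) := by
      have : Continuous (fun p : (Fin N → ℝ) × ℝ =>
          dist p.1 x * Real.exp (κ * |p.2|) + dist (Φ x p.2) (Φ x t)) := by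
        have := hc x
        fun_prop
      simpa using this.tendsto (x, t)
    refine squeeze_zero (fun _ => dist_nonneg) (fun p => ?_) h1
    exact (dist_triangle _ (Φ x p.2) _).trans (by gcongr; exact hd _ _ _)

theorem le_tauP_iff {x : Fin N → ℝ} {c : ℝ≥0∞} :
    c ≤ tauP Ω Φ x ↔ ∀ r : ℝ, 0 < r → ENNReal.ofReal r < c → Φ x r ∈ Ω := by
  constructor
  · intro hc r hr hrc
    by_contra hn
    exact absurd (hc.trans (sInf_le ⟨r, hr, rfl, hn⟩)) (not_le.2 hrc)
  · intro H
    refine le_sInf ?_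
    rintro _ ⟨r, hr, rfl, hn⟩
    by_contra hlt
    exact hn (H r hr (not_le.1 hlt))

theorem tauP_le {x : Fin N → ℝ} {r : ℝ} (hr : 0 < r) (hn : Φ x r ∉ Ω) :
    tauP Ω Φ x ≤ ENNReal.ofReal r := sInf_le ⟨r, hr, rfl, hn⟩

theorem mem_of_lt_tauP {x : Fin N → ℝ} {r : ℝ} (hr : 0 < r)
    (hlt : ENNReal.ofReal r < tauP Ω Φ x) : Φ x r ∈ Ω := le_tauP_iff.1 le_rfl r hr hlt

theorem mem_of_lt_tauM {x : Fin N → ℝ} {r : ℝ} (hr : 0 < r)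
    (hlt : ENNReal.ofReal r < tauM Ω Φ x) : Φ x (-r) ∈ Ω :=
  mem_of_lt_tauP (Φ := revFlow Φ) hr hlt

/-- The cocycle property of the forward exit time along an arc contained in `Ω`. -/
theorem tauP_shift (h : IsContFlow Φ) {x : Fin N → ℝ} {s : ℝ} (hs : 0 ≤ s)
    (H : ∀ r : ℝ, 0 < r → r ≤ s → Φ x r ∈ Ω) :
    tauP Ω Φ x = tauP Ω Φ (Φ x s) + ENNReal.ofReal s := by
  apply le_antisymm
  · conv_rhs => rw [tauP, ENNReal.sInf_add]
    refine le_iInf₂ ?_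
    rintro _ ⟨r, hr, rfl, hn⟩
    rw [h.add] at hn
    rw [← ENNReal.ofReal_add hr.le hs, add_comm]
    exact tauP_le (by linarith) hn
  · refine le_sInf ?_
    rintro _ ⟨r, hr, rfl, hn⟩
    have hsr : s < r := by
      by_contra hle
      exact hn (H r hr (not_lt.1 hle))
    have : tauP Ω Φ (Φ x s) ≤ ENNReal.ofReal (r - s) := by
      apply tauP_le (by linarith)
      rw [h.add]; simpa using hn
    calc _ ≤ ENNReal.ofReal (r - s) + ENNReal.ofReal s := by gcongr
      _ = _ := by rw [← ENNReal.ofReal_add (by linarith) hs]; simp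

theorem tauM_shift (h : IsContFlow Φ) {x : Fin N → ℝ} {s : ℝ} (hs : 0 ≤ s)
    (H : ∀ r : ℝ, 0 < r → r ≤ s → Φ x (-r) ∈ Ω) :
    tauM Ω Φ x = tauM Ω Φ (Φ x (-s)) + ENNReal.ofReal s :=
  tauP_shift h.rev hs H

theorem tauP_pos (h : IsContFlow Φ) (hΩ : IsOpen Ω) {x : Fin N → ℝ} (hx : x ∈ Ω) :
    0 < tauP Ω Φ x := by
  have hc : ContinuousAt (fun r => Φ x r) 0 :=
    (h.cont.comp (continuous_const.prodMk continuous_id)).continuousAt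
  have : ∀ᶠ r in 𝓝 (0 : ℝ), Φ x r ∈ Ω :=
    hc.eventually_mem (by simpa [h.zero] using hΩ.mem_nhds hx)
  obtain ⟨ε, hε, H⟩ := Metric.eventually_nhds_iff.1 this
  refine lt_of_lt_of_le (ENNReal.ofReal_pos.2 hε) (le_tauP_iff.2 fun r hr hlt => H ?_)
  rw [Real.dist_eq, sub_zero, abs_of_pos hr]
  exact (ENNReal.ofReal_lt_ofReal_iff hε).1 hlt

theorem tauM_pos (h : IsContFlow Φ) (hΩ : IsOpen Ω) {x : Fin N → ℝ} (hx : x ∈ Ω) :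
    0 < tauM Ω Φ x := tauP_pos h.rev hΩ hx

/-- `{c ≤ τ₊}` is a countable intersection of sets asking that a compact time interval is
carried into `Ω`, and these are open. -/
theorem measurable_tauP (h : IsContFlow Φ) (hΩ : IsOpen Ω) : Measurable (tauP Ω Φ) := by
  refine measurable_of_Ici fun c => ?_
  have : tauP Ω Φ ⁻¹' Ici c = ⋂ (p : ℚ) (q : ℚ) (_ : 0 < p ∧ ENNReal.ofReal q < c),
      {x | ∀ r ∈ Icc (p : ℝ) q, Φ x r ∈ Ω} := by
    ext x
    simp only [mem_preimage, mem_Ici, mem_iInter, mem_ofPred_eq, le_tauP_iff]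
    constructor
    · rintro H p q ⟨hp, hq⟩ r ⟨h1, h2⟩
      exact H r (lt_of_lt_of_le (by exact_mod_cast hp) h1)
        ((ENNReal.ofReal_le_ofReal h2).trans_lt hq)
    · intro H r hr hrc
      obtain ⟨p, hp0, hpr⟩ := exists_rat_btwn hr
      have hcont : ∀ᶠ q in 𝓝[>] r, ENNReal.ofReal q < c :=
        nhdsWithin_le_nhds (ENNReal.continuous_ofReal.continuousAt.eventually_lt_const hrc)
      obtain ⟨u, hu, hus⟩ := (mem_nhdsGT_iff_exists_Ioo_subset).1 hcont
      obtain ⟨q, hq1, hq2⟩ := exists_rat_btwn (mem_Ioi.1 hu)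
      exact H p q ⟨by exact_mod_cast hp0, hus ⟨hq1, hq2⟩⟩ r ⟨hpr.le, hq1.le⟩
  rw [this]
  refine MeasurableSet.iInter fun p => MeasurableSet.iInter fun q => MeasurableSet.iInter fun _ =>
    IsOpen.measurableSet ?_
  rw [isOpen_iff_eventually]
  intro x hx
  exact isCompact_Icc.eventually_forall_of_forall_eventually fun r hr =>
    h.cont.continuousAt.eventually_mem (hΩ.mem_nhds (hx r hr))

theorem measurable_tauM (h : IsContFlow Φ) (hΩ : IsOpen Ω) : Measurable (tauM Ω Φ) :=
  measurable_tauP h.rev hΩ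

/-! ### Outgoing boundary and orbits -/

/-- The point at time `-s` before the boundary point `y`, for `0 < s < τ₋(y)`, lies in `Ω`,
with exit times `τ₊ = s` and `τ₋ = τ₋(y) - s`. -/
theorem back_point (h : IsContFlow Φ) {y : Fin N → ℝ} (hy : y ∉ Ω) {s : ℝ} (hs : 0 < s)
    (hlt : ENNReal.ofReal s < tauM Ω Φ y) :
    Φ y (-s) ∈ Ω ∧ tauP Ω Φ (Φ y (-s)) = ENNReal.ofReal s ∧
      tauM Ω Φ y = tauM Ω Φ (Φ y (-s)) + ENNReal.ofReal s := by
  refine ⟨mem_of_lt_tauM hs hlt, le_antisymm (tauP_le hs ?_) (le_tauP_iff.2 ?_),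
    tauM_shift h hs.le ?_⟩
  · rwa [h.add, neg_add_cancel, h.zero]
  · intro r hr hrs
    have hrs' := (ENNReal.ofReal_lt_ofReal_iff hs).1 hrs
    rw [h.add, show -s + r = -(s - r) by ring]
    exact mem_of_lt_tauM (by linarith)
      ((ENNReal.ofReal_le_ofReal (by linarith)).trans_lt hlt)
  · intro r hr hrs
    exact mem_of_lt_tauM hr ((ENNReal.ofReal_le_ofReal hrs).trans_lt hlt)

/-- Every point of `Ω` with finite forward exit time `s` is `Φ(y,-s)` for its exit point `y`. -/
theorem exit_point (h : IsContFlow Φ) (hΩ : IsOpen Ω) {x : Fin N → ℝ} (hx : x ∈ Ω)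
    (hfin : tauP Ω Φ x < ⊤) :
    ∃ s : ℝ, 0 < s ∧ s = (tauP Ω Φ x).toReal ∧ Φ x s ∉ Ω ∧
      ENNReal.ofReal s < tauM Ω Φ (Φ x s) ∧ x = Φ (Φ x s) (-s) := by
  have hpos := tauP_pos h hΩ hx
  have hs : 0 < (tauP Ω Φ x).toReal := ENNReal.toReal_pos hpos.ne' hfin.ne
  refine ⟨_, hs, rfl, ?_⟩
  set s := (tauP Ω Φ x).toReal with hsdef
  have hos : ENNReal.ofReal s = tauP Ω Φ x := ENNReal.ofReal_toReal hfin.ne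
  have hin : ∀ r, 0 < r → r < s → Φ x r ∈ Ω := fun r hr hrs =>
    mem_of_lt_tauP hr (by rw [← hos]; exact (ENNReal.ofReal_lt_ofReal_iff hs).2 hrs)
  have hback : x = Φ (Φ x s) (-s) := by rw [h.add, add_neg_cancel, h.zero]
  refine ⟨?_, ?_, hback⟩
  · -- otherwise the exit time could be prolonged, `Ω` being open
    intro hmem
    have h1 := tauP_shift (Ω := Ω) h hs.le (x := x) fun r hr hrs => by
      rcases hrs.lt_or_eq with h2 | h2
      · exact hin r hr h2
      · rwa [h2]
    rw [hos] at h1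
    have h2 := tauP_pos h hΩ hmem
    have : tauP Ω Φ x < tauP Ω Φ (Φ x s) + tauP Ω Φ x := by
      conv_lhs => rw [← zero_add (tauP Ω Φ x)]
      exact ENNReal.add_lt_add_right hfin.ne h2
    exact absurd h1 this.ne
  · have h1 := tauM_shift (Ω := Ω) h hs.le (x := Φ x s) fun r hr hrs => by
      rw [h.add]
      rcases hrs.lt_or_eq with h2 | h2
      · exact hin _ (by linarith) (by linarith)
      · rw [h2, add_neg_cancel, h.zero]; exact hx
    rw [h1, ← hback]
    conv_lhs => rw [← zero_add (ENNReal.ofReal s)]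
    exact ENNReal.add_lt_add_right ENNReal.ofReal_ne_top (tauM_pos h hΩ hx)

/-- An intrinsic description of `Γ₊`, from which its measurability is clear. -/
theorem gammaP_eq (h : IsContFlow Φ) (hΩ : IsOpen Ω) :
    GammaP Ω Φ = {y | y ∉ Ω ∧ 0 < tauM Ω Φ y} := by
  ext y
  constructor
  · rintro ⟨-, x, hx, hfin, rfl⟩
    obtain ⟨s, hs, hseq, hn, hlt, -⟩ := exit_point h hΩ hx hfin
    rw [← hseq]
    exact ⟨hn, bot_le.trans_lt hlt⟩
  · rintro ⟨hy, hpos⟩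
    have hev : ∀ᶠ s in 𝓝[>] (0 : ℝ), ENNReal.ofReal s < tauM Ω Φ y :=
      nhdsWithin_le_nhds
        (ENNReal.continuous_ofReal.continuousAt.eventually_lt_const (by simpa using hpos))
    have hpos' : ∀ᶠ s in 𝓝[>] (0 : ℝ), 0 < s := self_mem_nhdsWithin
    have hev' : ∀ᶠ s in 𝓝[>] (0 : ℝ), Φ y (-s) ∈ Ω := by
      filter_upwards [hev, hpos'] with s h1 h2 using mem_of_lt_tauM h2 h1
    have hlim : Tendsto (fun s => Φ y (-s)) (𝓝[>] (0 : ℝ)) (𝓝 y) := by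
      have hc : Continuous (fun s : ℝ => Φ y (-s)) :=
        h.cont.comp (continuous_const.prodMk continuous_neg)
      have := hc.tendsto 0
      simp only [neg_zero, h.zero] at this
      exact this.mono_left nhdsWithin_le_nhds
    refine ⟨?_, ?_⟩
    · rw [hΩ.frontier_eq]
      exact ⟨mem_closure_of_tendsto hlim hev', hy⟩
    · obtain ⟨s, hs1, hs2⟩ := (hev.and hpos').exists
      obtain ⟨h1, h2, -⟩ := back_point h hy hs2 hs1
      refine ⟨_, h1, by rw [h2]; exact ENNReal.ofReal_lt_top, ?_⟩
      rw [h2, ENNReal.toReal_ofReal hs2.le, h.add, neg_add_cancel, h.zero]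

theorem measurableSet_gammaP (h : IsContFlow Φ) (hΩ : IsOpen Ω) :
    MeasurableSet (GammaP Ω Φ) := by
  rw [gammaP_eq h hΩ]
  exact hΩ.measurableSet.compl.inter (measurable_tauM h hΩ measurableSet_Ioi)

/-- The maximal time interval around `0` during which the orbit of `x ∈ Ω` stays in `Ω`. -/
def orbitTimes (Ω : Set (Fin N → ℝ)) (Φ : (Fin N → ℝ) → ℝ → (Fin N → ℝ)) (x : Fin N → ℝ) :
    Set ℝ :=
  {r | ENNReal.ofReal r < tauP Ω Φ x ∧ ENNReal.ofReal (-r) < tauM Ω Φ x}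

/-- The interval of integration of `curveInt`. -/
def curveTimes (τ : ℝ≥0∞) : Set ℝ := {s : ℝ | 0 < s ∧ ENNReal.ofReal s < τ}

theorem measurableSet_curveTimes (τ : ℝ≥0∞) : MeasurableSet (curveTimes τ) :=
  measurableSet_Ioi.inter (ENNReal.measurable_ofReal measurableSet_Iio)

theorem measurableSet_orbitTimes (x : Fin N → ℝ) : MeasurableSet (orbitTimes Ω Φ x) :=
  (ENNReal.measurable_ofReal measurableSet_Iio).inter
    ((ENNReal.measurable_ofReal.comp measurable_neg) measurableSet_Iio)

/-- Along the orbit of `y ∈ Γ₊`, the reflection `r ↦ s - r` turns times counted from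
`Φ(y,-s)` into times counted backwards from `y`. -/
theorem mem_orbitTimes_back (h : IsContFlow Φ) (hΩ : IsOpen Ω) {y : Fin N → ℝ} (hy : y ∉ Ω)
    {s : ℝ} (hs : s ∈ curveTimes (tauM Ω Φ y)) (r : ℝ) :
    r ∈ orbitTimes Ω Φ (Φ y (-s)) ↔ s - r ∈ curveTimes (tauM Ω Φ y) := by
  obtain ⟨h1, h2, h3⟩ := back_point h hy hs.1 hs.2
  have hpos := tauM_pos h hΩ h1
  simp only [orbitTimes, curveTimes, mem_ofPred_eq]
  rw [h2, h3, ENNReal.ofReal_lt_ofReal_iff hs.1, sub_pos]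
  refine and_congr_right fun hrs => ?_
  rcases le_total r 0 with hr | hr
  · rw [sub_eq_neg_add, ENNReal.ofReal_add (by linarith) hs.1.le,
      ENNReal.add_lt_add_iff_right ENNReal.ofReal_ne_top]
  · rw [ENNReal.ofReal_of_nonpos (by linarith : -r ≤ 0)]
    refine iff_of_true hpos ?_
    calc ENNReal.ofReal (s - r) ≤ 0 + ENNReal.ofReal s := by
          rw [zero_add]; exact ENNReal.ofReal_le_ofReal (by linarith)
      _ < _ := ENNReal.add_lt_add_right ENNReal.ofReal_ne_top hpos

/-- The integral of `k` along the whole orbit of `x` in `Ω`. -/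
def orbitInt (Ω : Set (Fin N → ℝ)) (Φ : (Fin N → ℝ) → ℝ → (Fin N → ℝ))
    (k : (Fin N → ℝ) → ℝ) (x : Fin N → ℝ) : ℝ :=
  ∫ r in orbitTimes Ω Φ x, k (Φ x r)

theorem orbitInt_back (h : IsContFlow Φ) (hΩ : IsOpen Ω) (k : (Fin N → ℝ) → ℝ)
    {y : Fin N → ℝ} (hy : y ∉ Ω) {s : ℝ} (hs : s ∈ curveTimes (tauM Ω Φ y)) :
    orbitInt Ω Φ k (Φ y (-s)) = curveInt (fun r => k (Φ y (-r))) (tauM Ω Φ y) := by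
  rw [orbitInt, curveInt, ← integral_indicator (measurableSet_orbitTimes _)]
  change _ = ∫ r in curveTimes (tauM Ω Φ y), k (Φ y (-r))
  rw [← integral_indicator (measurableSet_curveTimes _),
    ← integral_sub_left_eq_self ((curveTimes _).indicator _) volume s]
  congr 1
  ext r
  have := mem_orbitTimes_back h hΩ hy hs r
  by_cases hr : r ∈ orbitTimes Ω Φ (Φ y (-s))
  · rw [indicator_of_mem hr, indicator_of_mem (this.1 hr), h.add]
    congr 2; ring
  · rw [indicator_of_notMem hr, indicator_of_notMem (fun hh => hr (this.2 hh))]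

/-- Moving along the orbit of `x ∈ Ω` by a time `r` of either sign changes the exit times by `r`.
The sums are arranged so that no truncated subtraction occurs. -/
theorem orbit_move (h : IsContFlow Φ) {x : Fin N → ℝ} (hx : x ∈ Ω) {r : ℝ}
    (hr : r ∈ orbitTimes Ω Φ x) :
    Φ x r ∈ Ω ∧ tauP Ω Φ (Φ x r) + ENNReal.ofReal r = tauP Ω Φ x + ENNReal.ofReal (-r) ∧
      tauM Ω Φ (Φ x r) + ENNReal.ofReal (-r) = tauM Ω Φ x + ENNReal.ofReal r := by
  have key : ∀ Ψ : (Fin N → ℝ) → ℝ → (Fin N → ℝ), IsContFlow Ψ → ∀ r : ℝ, 0 ≤ r →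
      ENNReal.ofReal r < tauP Ω Ψ x →
      Ψ x r ∈ Ω ∧ tauP Ω Ψ (Ψ x r) + ENNReal.ofReal r = tauP Ω Ψ x ∧
        tauM Ω Ψ (Ψ x r) = tauM Ω Ψ x + ENNReal.ofReal r := by
    intro Ψ hΨ r hr0 hr
    have hin : ∀ s, 0 ≤ s → s ≤ r → Ψ x s ∈ Ω := by
      intro s hs hsr
      rcases hs.eq_or_lt with h0 | h0
      · rwa [← h0, hΨ.zero]
      · exact mem_of_lt_tauP h0 ((ENNReal.ofReal_le_ofReal hsr).trans_lt hr)
    refine ⟨hin r hr0 le_rfl, (tauP_shift hΨ hr0 fun s h1 h2 => hin s h1.le h2).symm, ?_⟩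
    have := tauM_shift (Ω := Ω) hΨ hr0 (x := Ψ x r) fun s h1 h2 => by
      rw [hΨ.add]; exact hin _ (by linarith) (by linarith)
    rw [this, hΨ.add, add_neg_cancel, hΨ.zero]
  rcases le_total 0 r with h0 | h0
  · obtain ⟨h1, h2, h3⟩ := key Φ h r h0 hr.1
    rw [ENNReal.ofReal_of_nonpos (by linarith : -r ≤ 0)]
    simp [h1, h2, h3]
  · obtain ⟨h1, h2, h3⟩ := key (revFlow Φ) h.rev (-r) (by linarith) hr.2
    simp only [tauP_rev, tauM_rev, revFlow, neg_neg] at h1 h2 h3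
    rw [ENNReal.ofReal_of_nonpos h0]
    simp [h1, h2, h3]

theorem neg_mem_orbitTimes (h : IsContFlow Φ) (hΩ : IsOpen Ω) {x : Fin N → ℝ} (hx : x ∈ Ω)
    {r : ℝ} (hr : r ∈ orbitTimes Ω Φ x) : -r ∈ orbitTimes Ω Φ (Φ x r) := by
  obtain ⟨h1, h2, h3⟩ := orbit_move h hx hr
  have p1 := tauP_pos h hΩ h1
  have p2 := tauM_pos h hΩ h1
  have q1 := tauP_pos h hΩ hx
  have q2 := tauM_pos h hΩ hx
  simp only [orbitTimes, mem_ofPred_eq, neg_neg]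
  rcases le_total 0 r with h0 | h0
  · rw [ENNReal.ofReal_of_nonpos (by linarith : -r ≤ 0), add_zero] at *
    refine ⟨p1, ?_⟩
    rw [h3]
    conv_lhs => rw [← zero_add (ENNReal.ofReal r)]
    exact ENNReal.add_lt_add_right ENNReal.ofReal_ne_top q2
  · rw [ENNReal.ofReal_of_nonpos h0, add_zero] at *
    refine ⟨?_, p2⟩
    rw [h2]
    conv_lhs => rw [← zero_add (ENNReal.ofReal (-r))]
    exact ENNReal.add_lt_add_right ENNReal.ofReal_ne_top q1

/-! ### Normalised weight near the exit -/

/-- The weight carried by the points of `Ω` at distance at most one time unit from the exit, and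
normalised to have total integral one along every orbit that leaves `Ω`. -/
def exitWeight (Ω : Set (Fin N → ℝ)) (Φ : (Fin N → ℝ) → ℝ → (Fin N → ℝ)) (x : Fin N → ℝ) : ℝ :=
  open Classical in
  if x ∈ Ω ∧ tauP Ω Φ x ≤ 1 then ((1 ⊓ (tauM Ω Φ x + tauP Ω Φ x)).toReal)⁻¹ else 0

theorem exitWeight_nonneg (x : Fin N → ℝ) : 0 ≤ exitWeight Ω Φ x := by
  unfold exitWeight; split_ifs <;> positivity

theorem exitWeight_eq_zero {x : Fin N → ℝ} (hx : 1 < tauP Ω Φ x) : exitWeight Ω Φ x = 0 :=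
  if_neg fun hh => absurd hh.2 (not_le.2 hx)

theorem measurable_exitWeight (h : IsContFlow Φ) (hΩ : IsOpen Ω) :
    Measurable (exitWeight Ω Φ) := by
  have hp := measurable_tauP h hΩ
  have hm := measurable_tauM h hΩ
  refine Measurable.ite (hΩ.measurableSet.inter (hp measurableSet_Iic)) ?_ measurable_const
  fun_prop

theorem curveInt_exitWeight (h : IsContFlow Φ) {y : Fin N → ℝ} (hy : y ∉ Ω)
    (hpos : 0 < tauM Ω Φ y) :
    curveInt (fun s => exitWeight Ω Φ (Φ y (-s))) (tauM Ω Φ y) = 1 := by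
  set τ := tauM Ω Φ y with hτ
  have hval : ∀ s ∈ curveTimes τ, exitWeight Ω Φ (Φ y (-s))
      = (Iic (1 : ℝ)).indicator (fun _ => ((1 ⊓ τ).toReal)⁻¹) s := by
    intro s hs
    obtain ⟨h1, h2, h3⟩ := back_point h hy hs.1 hs.2
    by_cases hs1 : s ≤ 1
    · rw [indicator_of_mem (mem_Iic.2 hs1), exitWeight, if_pos, h2, ← h3]
      exact ⟨h1, by rw [h2]; simpa using hs1⟩
    · rw [indicator_of_notMem (by simpa using hs1), exitWeight_eq_zero]
      rw [h2]; simpa using hs1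
  change ∫ s in curveTimes τ, exitWeight Ω Φ (Φ y (-s)) = 1
  rw [setIntegral_congr_fun (measurableSet_curveTimes _) hval,
    setIntegral_indicator measurableSet_Iic, setIntegral_const, smul_eq_mul]
  rcases lt_or_ge 1 τ with h1 | h1
  · have : curveTimes τ ∩ Iic 1 = Ioc 0 1 := by
      ext s
      simp only [curveTimes, mem_inter_iff, mem_ofPred_eq, mem_Iic, mem_Ioc]
      refine ⟨fun hh => ⟨hh.1.1, hh.2⟩, fun hh => ⟨⟨hh.1, lt_of_le_of_lt ?_ h1⟩, hh.2⟩⟩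
      simpa using hh.2
    rw [this, inf_eq_left.2 h1.le]
    simp
  · have hfin : τ ≠ ⊤ := (h1.trans_lt ENNReal.one_lt_top).ne
    have hlt : ∀ s : ℝ, 0 < s → (ENNReal.ofReal s < τ ↔ s < τ.toReal) := fun s hs => by
      rw [ENNReal.ofReal_lt_iff_lt_toReal hs.le hfin]
    have h1' : τ.toReal ≤ 1 := ENNReal.toReal_le_of_le_ofReal zero_le_one (by simpa using h1)
    have : curveTimes τ ∩ Iic 1 = Ioo 0 τ.toReal := by
      ext s
      simp only [curveTimes, mem_inter_iff, mem_ofPred_eq, mem_Iic, mem_Ioo]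
      refine ⟨fun hh => ⟨hh.1.1, (hlt s hh.1.1).1 hh.1.2⟩,
        fun hh => ⟨⟨hh.1, (hlt s hh.1).2 hh.2⟩, hh.2.le.trans h1'⟩⟩
    rw [this, inf_eq_right.2 h1]
    have hp : 0 < τ.toReal := ENNReal.toReal_pos hpos.ne' hfin
    simp [measureReal_def, hp.le, hp.ne']

theorem orbitInt_exitWeight (h : IsContFlow Φ) (hΩ : IsOpen Ω) {x : Fin N → ℝ} (hx : x ∈ Ω)
    (hfin : tauP Ω Φ x < ⊤) : orbitInt Ω Φ (exitWeight Ω Φ) x = 1 := by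
  obtain ⟨s, hs, -, hn, hlt, hback⟩ := exit_point h hΩ hx hfin
  rw [hback, orbitInt_back h hΩ _ hn ⟨hs, hlt⟩,
    curveInt_exitWeight h hn (bot_le.trans_lt hlt)]

theorem exitWeight_orbit_eq_zero (h : IsContFlow Φ) {x : Fin N → ℝ} (hx : x ∈ Ω)
    (htop : tauP Ω Φ x = ⊤) {r : ℝ} (hr : r ∈ orbitTimes Ω Φ x) :
    exitWeight Ω Φ (Φ x r) = 0 := by
  obtain ⟨-, h2, -⟩ := orbit_move h hx hr
  apply exitWeight_eq_zero
  rw [htop, top_add, ENNReal.add_eq_top] at h2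
  rw [h2.resolve_right ENNReal.ofReal_ne_top]
  exact ENNReal.one_lt_top

/-- The pairs `(r, x)` with `x ∈ Ω` and `r` in the time interval of the orbit of `x` in `Ω`. -/
def orbitGraph (Ω : Set (Fin N → ℝ)) (Φ : (Fin N → ℝ) → ℝ → (Fin N → ℝ)) :
    Set (ℝ × (Fin N → ℝ)) :=
  {p | p.2 ∈ Ω ∧ p.1 ∈ orbitTimes Ω Φ p.2}

theorem measurableSet_orbitGraph (h : IsContFlow Φ) (hΩ : IsOpen Ω) :
    MeasurableSet (orbitGraph Ω Φ) := by
  have hp : Measurable fun p : ℝ × (Fin N → ℝ) => tauP Ω Φ p.2 :=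
    (measurable_tauP h hΩ).comp measurable_snd
  have hm : Measurable fun p : ℝ × (Fin N → ℝ) => tauM Ω Φ p.2 :=
    (measurable_tauM h hΩ).comp measurable_snd
  exact (measurable_snd hΩ.measurableSet).inter
    ((measurableSet_lt (ENNReal.measurable_ofReal.comp measurable_fst) hp).inter
      (measurableSet_lt (ENNReal.measurable_ofReal.comp measurable_fst.neg) hm))

/-- The exchange `(r, x) ↦ (-r, Φ(x,r))` of the two ends of an orbit arc. -/
def swapEnds (Φ : (Fin N → ℝ) → ℝ → (Fin N → ℝ)) (p : ℝ × (Fin N → ℝ)) : ℝ × (Fin N → ℝ) :=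
  (-p.1, Φ p.2 p.1)

theorem swapEnds_mem_iff (h : IsContFlow Φ) (hΩ : IsOpen Ω) (p : ℝ × (Fin N → ℝ)) :
    swapEnds Φ p ∈ orbitGraph Ω Φ ↔ p ∈ orbitGraph Ω Φ := by
  have key : ∀ q : ℝ × (Fin N → ℝ), q ∈ orbitGraph Ω Φ → swapEnds Φ q ∈ orbitGraph Ω Φ :=
    fun q hq => ⟨(orbit_move h hq.1 hq.2).1, neg_mem_orbitTimes h hΩ hq.1 hq.2⟩
  refine ⟨fun hh => ?_, key p⟩
  have := key _ hh
  simpa [swapEnds, h.add, h.zero] using this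

/-- The total mass that `f` puts on the orbit of `x` can be concentrated near the exit, as
`exitWeight x * orbitInt f x`, without changing the integral over the points that leave `Ω`.
This is Fubini's theorem combined with the invariance of `dr ⊗ μ` under `swapEnds`. -/
theorem integral_concentrate (h : IsContFlow Φ) (hΩ : IsOpen Ω) {μ : Measure (Fin N → ℝ)}
    [SFinite μ] (hμ : ∀ r, MeasurePreserving (fun x => Φ x r) μ μ)
    {f : (Fin N → ℝ) → ℝ} (hf : Integrable f (μ.restrict Ω)) :
    Integrable (fun x => exitWeight Ω Φ x * orbitInt Ω Φ f x) (μ.restrict Ω) ∧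
      ∫ x in Ω, exitWeight Ω Φ x * orbitInt Ω Φ f x ∂μ
        = ∫ x in {x ∈ Ω | tauP Ω Φ x < ⊤}, f x ∂μ := by
  have hflow : Measurable (fun p : ℝ × (Fin N → ℝ) => Φ p.2 p.1) :=
    (h.cont.comp (continuous_snd.prodMk continuous_fst)).measurable
  have hC := measurableSet_orbitGraph h hΩ
  have hfin : MeasurableSet {x ∈ Ω | tauP Ω Φ x < ⊤} :=
    hΩ.measurableSet.inter (measurable_tauP h hΩ measurableSet_Iio)
  have hS : MeasurePreserving (swapEnds Φ) ((volume : Measure ℝ).prod μ) (volume.prod μ) :=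
    (Measure.measurePreserving_neg (volume : Measure ℝ)).skew_product (g := fun r x => Φ x r)
      hflow (Eventually.of_forall fun r => (hμ r).map_eq)
  set W : ℝ × (Fin N → ℝ) → ℝ :=
    (orbitGraph Ω Φ).indicator fun p => exitWeight Ω Φ (Φ p.2 p.1) with hWdef
  have hWm : Measurable W := ((measurable_exitWeight h hΩ).comp hflow).indicator hC
  have hW0 : ∀ p, 0 ≤ W p := fun p => indicator_nonneg (fun _ _ => exitWeight_nonneg _) p
  have hslice : ∀ x ∈ Ω, ∀ g : ℝ × (Fin N → ℝ) → ℝ,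
      (fun r => (orbitGraph Ω Φ).indicator g (r, x))
        = (orbitTimes Ω Φ x).indicator fun r => g (r, x) := by
    intro x hx g
    ext r
    by_cases hr : r ∈ orbitTimes Ω Φ x
    · rw [indicator_of_mem hr, indicator_of_mem (show (r, x) ∈ orbitGraph Ω Φ from ⟨hx, hr⟩)]
    · rw [indicator_of_notMem hr, indicator_of_notMem (fun hh => hr hh.2)]
  have hout : ∀ x ∉ Ω, ∀ (g : ℝ × (Fin N → ℝ) → ℝ) r,
      (orbitGraph Ω Φ).indicator g (r, x) = 0 := fun x hx g r =>
    indicator_of_notMem (fun hh => hx hh.1) _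
  have hWint1 : ∀ x, x ∈ Ω → tauP Ω Φ x < ⊤ → ∫ r, W (r, x) = 1 := by
    intro x hx hx'
    rw [hWdef, hslice x hx, integral_indicator (measurableSet_orbitTimes _)]
    exact orbitInt_exitWeight h hΩ hx hx'
  have hWint0 : ∀ x, ¬ (x ∈ Ω ∧ tauP Ω Φ x < ⊤) → ∀ r, W (r, x) = 0 := by
    intro x hx r
    by_cases hxΩ : x ∈ Ω
    · by_cases hr : (r, x) ∈ orbitGraph Ω Φ
      · rw [hWdef, indicator_of_mem hr]
        have htop : tauP Ω Φ x = ⊤ := by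
          by_contra hne; exact hx ⟨hxΩ, lt_top_iff_ne_top.2 hne⟩
        exact exitWeight_orbit_eq_zero h hxΩ htop hr.2
      · exact indicator_of_notMem hr _
    · exact hout x hxΩ _ r
  have hWi : ∀ x, Integrable (fun r => W (r, x)) := by
    intro x
    by_cases hx : x ∈ Ω ∧ tauP Ω Φ x < ⊤
    · exact Integrable.of_integral_ne_zero (by rw [hWint1 x hx.1 hx.2]; exact one_ne_zero)
    · simp [hWint0 x hx]
  have hWv : ∀ x, ∫ r, W (r, x) = {x ∈ Ω | tauP Ω Φ x < ⊤}.indicator (fun _ => (1 : ℝ)) x := by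
    intro x
    by_cases hx : x ∈ Ω ∧ tauP Ω Φ x < ⊤
    · rw [indicator_of_mem (show x ∈ {x ∈ Ω | tauP Ω Φ x < ⊤} from hx), hWint1 x hx.1 hx.2]
    · rw [indicator_of_notMem (show x ∉ {x ∈ Ω | tauP Ω Φ x < ⊤} from hx)]
      simp [hWint0 x hx]
  set f₀ : (Fin N → ℝ) → ℝ := Ω.indicator f with hf₀
  have hf₀i : Integrable f₀ μ := (integrable_indicator_iff hΩ.measurableSet).2 hf
  set H : ℝ × (Fin N → ℝ) → ℝ := fun p => W p * f₀ p.2 with hH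
  have hHi : Integrable H ((volume : Measure ℝ).prod μ) := by
    have hHm : AEStronglyMeasurable H ((volume : Measure ℝ).prod μ) :=
      hWm.aestronglyMeasurable.mul hf₀i.aestronglyMeasurable.comp_snd
    rw [integrable_prod_iff' hHm]
    refine ⟨Eventually.of_forall fun x => (hWi x).mul_const (f₀ x), ?_⟩
    have : (fun x => ∫ r, ‖H (r, x)‖) = {x ∈ Ω | tauP Ω Φ x < ⊤}.indicator fun x => ‖f₀ x‖ := by
      ext x
      simp only [hH, norm_mul, Real.norm_of_nonneg (hW0 _)]
      rw [integral_mul_const, hWv]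
      by_cases hx : x ∈ {x ∈ Ω | tauP Ω Φ x < ⊤} <;> simp [hx]
    rw [this]
    exact hf₀i.norm.indicator hfin
  have hHv : ∫ p, H p ∂((volume : Measure ℝ).prod μ)
      = ∫ x in {x ∈ Ω | tauP Ω Φ x < ⊤}, f x ∂μ := by
    rw [integral_prod_symm _ hHi, ← integral_indicator hfin]
    congr 1
    ext x
    simp only [hH]
    rw [integral_mul_const, hWv]
    by_cases hx : x ∈ {x ∈ Ω | tauP Ω Φ x < ⊤}
    · rw [indicator_of_mem hx, indicator_of_mem hx, one_mul, hf₀, indicator_of_mem hx.1]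
    · rw [indicator_of_notMem hx, indicator_of_notMem hx, zero_mul]
  have hK : H ∘ swapEnds Φ
      = (orbitGraph Ω Φ).indicator fun p => exitWeight Ω Φ p.2 * f (Φ p.2 p.1) := by
    ext p
    by_cases hp : p ∈ orbitGraph Ω Φ
    · have hp' := (swapEnds_mem_iff h hΩ p).2 hp
      simp only [Function.comp, hH, hWdef]
      rw [indicator_of_mem hp, indicator_of_mem hp', hf₀, indicator_of_mem hp'.1]
      simp [swapEnds, h.add, h.zero]
    · have hp' := mt (swapEnds_mem_iff h hΩ p).1 hp
      simp only [Function.comp, hH, hWdef]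
      rw [indicator_of_notMem hp, indicator_of_notMem hp', zero_mul]
  have hKi := hS.integrable_comp_of_integrable hHi
  have hKv : ∫ p, (H ∘ swapEnds Φ) p ∂((volume : Measure ℝ).prod μ)
      = ∫ p, H p ∂((volume : Measure ℝ).prod μ) := by
    conv_rhs => rw [← hS.map_eq]
    exact (integral_map hS.measurable.aemeasurable
      (by rw [hS.map_eq]; exact hHi.aestronglyMeasurable)).symm
  have hKs : ∀ x, ∫ r, (H ∘ swapEnds Φ) (r, x)
      = Ω.indicator (fun x => exitWeight Ω Φ x * orbitInt Ω Φ f x) x := by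
    intro x
    rw [hK]
    by_cases hx : x ∈ Ω
    · rw [hslice x hx, integral_indicator (measurableSet_orbitTimes _), indicator_of_mem hx]
      exact integral_const_mul (exitWeight Ω Φ x) fun r => f (Φ x r)
    · rw [indicator_of_notMem hx]
      simp [hout x hx]
  constructor
  · have := hKi.integral_prod_right
    simp only [hKs] at this
    exact (integrable_indicator_iff hΩ.measurableSet).1 this
  · rw [← hHv, ← hKv, integral_prod_symm _ hKi]
    simp only [hKs]
    exact (integral_indicator hΩ.measurableSet).symm

/-! ### Integration along characteristics -/

/-- The identity of `BealsProperty` for the outgoing boundary. Its counterpart for the incoming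
boundary is the same statement for the reversed flow. -/
def OutBeals (Ω : Set (Fin N → ℝ)) (Φ : (Fin N → ℝ) → ℝ → (Fin N → ℝ))
    (μ ν : Measure (Fin N → ℝ)) : Prop :=
  ∀ T : ℝ, 0 < T → ∀ f : ((Fin N → ℝ) × ℝ) → ℝ,
    Integrable f ((μ.restrict Ω).prod (volume.restrict (Ioo (0 : ℝ) T))) →
    ∫ p, f p ∂((μ.restrict Ω).prod (volume.restrict (Ioo (0 : ℝ) T)))
        = (∫ t in Ioo (0 : ℝ) T, (∫ y in GammaP Ω Φ,
            (∫ s in Ioo (0 : ℝ) ((tauM Ω Φ y ⊓ ENNReal.ofReal t).toReal),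
              f (Φ y (-s), t - s)) ∂ν))
          + ∫ x in Ω, (∫ s in Ioo (0 : ℝ) ((tauM Ω Φ x ⊓ ENNReal.ofReal T).toReal),
              f (Φ x (-s), T - s)) ∂μ

theorem measurePreserving_reflect (T : ℝ) :
    MeasurePreserving (fun t : ℝ => T - t) (volume.restrict (Ioo (0 : ℝ) T))
      (volume.restrict (Ioo (0 : ℝ) T)) := by
  have := (Measure.measurePreserving_sub_left (volume : Measure ℝ) T).restrict_preimage
    (measurableSet_Ioo (a := (0 : ℝ)) (b := T))
  simpa using this

/-- Under `t ↦ T - t` the incoming half of `BealsProperty` becomes the outgoing half for the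
reversed flow. -/
theorem outBeals_rev {μ μm μp : Measure (Fin N → ℝ)} [SFinite μ]
    (hb : BealsProperty Ω Φ μ μm μp) : OutBeals Ω (revFlow Φ) μ μm := by
  intro T hT f hf
  have hR := measurePreserving_reflect T
  have he : MeasurableEmbedding fun t : ℝ => T - t :=
    (Homeomorph.subLeft T).measurableEmbedding
  have hR' : MeasurePreserving (Prod.map (id : (Fin N → ℝ) → (Fin N → ℝ)) fun t : ℝ => T - t)
      ((μ.restrict Ω).prod (volume.restrict (Ioo (0 : ℝ) T)))
      ((μ.restrict Ω).prod (volume.restrict (Ioo (0 : ℝ) T))) :=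
    (MeasurePreserving.id _).prod hR
  have hfi := hR'.integrable_comp_of_integrable hf
  have h1 := (hb T hT _ hfi).2
  have h2 : ∫ p, (f ∘ Prod.map (id : (Fin N → ℝ) → (Fin N → ℝ)) fun t : ℝ => T - t) p
        ∂((μ.restrict Ω).prod (volume.restrict (Ioo (0 : ℝ) T)))
      = ∫ p, f p ∂((μ.restrict Ω).prod (volume.restrict (Ioo (0 : ℝ) T))) := by
    conv_rhs => rw [← hR'.map_eq]
    exact (integral_map hR'.measurable.aemeasurable
      (by rw [hR'.map_eq]; exact hf.aestronglyMeasurable)).symm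
  rw [h2] at h1
  rw [h1, gammaP_rev]
  simp only [tauM_rev, revFlow, neg_neg, Function.comp, Prod.map, id]
  congr 1
  rw [← hR.integral_comp he]
  have e : ∀ x s : ℝ, T - (T - x + s) = x - s := fun x s => by ring
  simp only [sub_sub_cancel, e]

/-- The space-time function `g(x) 1_{1 < t + τ₊(x) < 2}` on `Ω × (0,2)` turns the identity
`OutBeals` into an identity without time variable: `t + τ₊` is constant along the lifted
characteristics, equal to the exit time when they leave through `Γ₊ × (0,2)` and to at least `2`
when they end at time `2`, so that the second term of `OutBeals` vanishes. -/
theorem integral_of_near_exit (h : IsContFlow Φ) (hΩ : IsOpen Ω) {μ ν : Measure (Fin N → ℝ)}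
    [SFinite μ] (hb : OutBeals Ω Φ μ ν) {g : (Fin N → ℝ) → ℝ}
    (hg : Integrable g (μ.restrict Ω)) (hg0 : ∀ x ∈ Ω, 1 < tauP Ω Φ x → g x = 0) :
    ∫ x in Ω, g x ∂μ
      = ∫ y in GammaP Ω Φ, curveInt (fun s => g (Φ y (-s))) (tauM Ω Φ y) ∂ν := by
  set B : Set ((Fin N → ℝ) × ℝ) :=
    {p | 1 < ENNReal.ofReal p.2 + tauP Ω Φ p.1 ∧ ENNReal.ofReal p.2 + tauP Ω Φ p.1 < 2} with hB
  have hBm : MeasurableSet B := by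
    have hm : Measurable fun p : (Fin N → ℝ) × ℝ => ENNReal.ofReal p.2 + tauP Ω Φ p.1 :=
      (ENNReal.measurable_ofReal.comp measurable_snd).add
        ((measurable_tauP h hΩ).comp measurable_fst)
    exact (hm measurableSet_Ioi).inter (hm measurableSet_Iio)
  have hBr : ∀ x t τ, tauP Ω Φ x = ENNReal.ofReal τ → 0 ≤ t → 0 ≤ τ →
      ((x, t) ∈ B ↔ 1 < t + τ ∧ t + τ < 2) := by
    intro x t τ hτ ht hτ0
    simp only [hB, mem_ofPred_eq]
    rw [hτ, ← ENNReal.ofReal_add ht hτ0, ENNReal.one_lt_ofReal, ← ENNReal.ofReal_ofNat 2,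
      ENNReal.ofReal_lt_ofReal_iff (by norm_num)]
  set f : (Fin N → ℝ) × ℝ → ℝ := B.indicator fun p => g p.1 with hf
  have hfi : Integrable f ((μ.restrict Ω).prod (volume.restrict (Ioo (0 : ℝ) 2))) :=
    (hg.comp_fst _).indicator hBm
  have hmain := hb 2 two_pos f hfi
  have hL : ∫ p, f p ∂((μ.restrict Ω).prod (volume.restrict (Ioo (0 : ℝ) 2)))
      = ∫ x in Ω, g x ∂μ := by
    rw [integral_prod _ hfi]
    refine setIntegral_congr_fun hΩ.measurableSet fun x hx => ?_
    rcases lt_or_ge 1 (tauP Ω Φ x) with h1 | h1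
    · have : ∀ t, f (x, t) = 0 := fun t => by
        simp only [hf, indicator_apply, hg0 x hx h1, ite_self]
      simp [this, hg0 x hx h1]
    · have hne : tauP Ω Φ x ≠ ⊤ := (h1.trans_lt ENNReal.one_lt_top).ne
      set τ := (tauP Ω Φ x).toReal with hτ
      have hτ' : tauP Ω Φ x = ENNReal.ofReal τ := (ENNReal.ofReal_toReal hne).symm
      have hτ0 : 0 ≤ τ := ENNReal.toReal_nonneg
      have hτ1 : τ ≤ 1 := ENNReal.toReal_le_of_le_ofReal zero_le_one (by simpa using h1)
      have h2 : ∀ t ∈ Ioo (0 : ℝ) 2,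
          f (x, t) = (Ioo (1 - τ) (2 - τ)).indicator (fun _ => g x) t := by
        intro t ht
        have := hBr x t τ hτ' ht.1.le hτ0
        by_cases htB : (x, t) ∈ B
        · have h3 := this.1 htB
          rw [hf, indicator_of_mem htB, indicator_of_mem]
          constructor <;> linarith
        · rw [hf, indicator_of_notMem htB, indicator_of_notMem]
          intro h3
          exact htB (this.2 ⟨by linarith [h3.1], by linarith [h3.2]⟩)
      have h3 : Ioo (0 : ℝ) 2 ∩ Ioo (1 - τ) (2 - τ) = Ioo (1 - τ) (2 - τ) :=
        inter_eq_right.2 (Ioo_subset_Ioo (by linarith) (by linarith))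
      change ∫ t in Ioo (0 : ℝ) 2, f (x, t) = g x
      rw [setIntegral_congr_fun measurableSet_Ioo h2, setIntegral_indicator measurableSet_Ioo, h3,
        setIntegral_const]
      simp [measureReal_def]
      norm_num
  have hR2 : ∫ x in Ω, (∫ s in Ioo (0 : ℝ) ((tauM Ω Φ x ⊓ ENNReal.ofReal 2).toReal),
      f (Φ x (-s), 2 - s)) ∂μ = 0 := by
    rw [setIntegral_congr_fun (g := fun _ => (0 : ℝ)) hΩ.measurableSet, integral_zero]
    intro x hx
    refine setIntegral_eq_zero_of_forall_eq_zero fun s hs => ?_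
    have hne : tauM Ω Φ x ⊓ ENNReal.ofReal 2 ≠ ⊤ :=
      (inf_le_right.trans_lt ENNReal.ofReal_lt_top).ne
    have hs' := (ENNReal.ofReal_lt_iff_lt_toReal hs.1.le hne).2 hs.2
    have hsτ := hs'.trans_le inf_le_left
    have hs2 : s < 2 :=
      (ENNReal.ofReal_lt_ofReal_iff two_pos).1 (hs'.trans_le inf_le_right)
    have hmem : -s ∈ orbitTimes Ω Φ x := by
      refine ⟨?_, by rwa [neg_neg]⟩
      rw [ENNReal.ofReal_of_nonpos (by linarith [hs.1])]
      exact tauP_pos h hΩ hx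
    obtain ⟨-, h2, -⟩ := orbit_move h hx hmem
    rw [ENNReal.ofReal_of_nonpos (by linarith [hs.1] : -s ≤ 0), add_zero, neg_neg] at h2
    refine indicator_of_notMem (fun hh => ?_) _
    have h3 : ENNReal.ofReal (2 - s) + (tauP Ω Φ x + ENNReal.ofReal s) < 2 := by
      rw [← h2]; exact hh.2
    have h4 : (2 : ℝ≥0∞) ≤ ENNReal.ofReal (2 - s) + (tauP Ω Φ x + ENNReal.ofReal s) := by
      calc (2 : ℝ≥0∞) = ENNReal.ofReal (2 - s) + ENNReal.ofReal s := by
            rw [← ENNReal.ofReal_add (by linarith) hs.1.le]; simp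
        _ ≤ _ := by gcongr; exact le_add_self
    exact absurd h3 (not_lt.2 h4)
  set G : (Fin N → ℝ) → ℝ := fun y => curveInt (fun s => g (Φ y (-s))) (tauM Ω Φ y) with hG
  have hR1 : ∀ t ∈ Ioo (0 : ℝ) 2, ∫ y in GammaP Ω Φ,
      (∫ s in Ioo (0 : ℝ) ((tauM Ω Φ y ⊓ ENNReal.ofReal t).toReal), f (Φ y (-s), t - s)) ∂ν
      = (Ioi (1 : ℝ)).indicator (fun _ => ∫ y in GammaP Ω Φ, G y ∂ν) t := by
    intro t ht
    have hin : ∀ y ∈ GammaP Ω Φ,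
        ∫ s in Ioo (0 : ℝ) ((tauM Ω Φ y ⊓ ENNReal.ofReal t).toReal), f (Φ y (-s), t - s)
        = (Ioi (1 : ℝ)).indicator (fun _ => G y) t := by
      intro y hy
      rw [gammaP_eq h hΩ] at hy
      have hne : tauM Ω Φ y ⊓ ENNReal.ofReal t ≠ ⊤ :=
        (inf_le_right.trans_lt ENNReal.ofReal_lt_top).ne
      have hIoo : ∀ s, s ∈ Ioo (0 : ℝ) ((tauM Ω Φ y ⊓ ENNReal.ofReal t).toReal) ↔
          s ∈ curveTimes (tauM Ω Φ y) ∧ s < t := by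
        intro s
        simp only [mem_Ioo, curveTimes, mem_ofPred_eq, and_assoc]
        refine and_congr_right fun hs => ?_
        rw [← ENNReal.ofReal_lt_iff_lt_toReal hs.le hne, lt_inf_iff,
          ENNReal.ofReal_lt_ofReal_iff ht.1]
      have hval : ∀ s ∈ Ioo (0 : ℝ) ((tauM Ω Φ y ⊓ ENNReal.ofReal t).toReal),
          f (Φ y (-s), t - s) = (Ioi (1 : ℝ)).indicator (fun _ => g (Φ y (-s))) t := by
        intro s hs
        obtain ⟨hs1, hs2⟩ := (hIoo s).1 hs
        obtain ⟨-, h2, -⟩ := back_point h hy.1 hs1.1 hs1.2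
        have h3 := hBr _ (t - s) s h2 (by linarith) hs1.1.le
        rw [sub_add_cancel] at h3
        by_cases ht1 : 1 < t
        · rw [hf, indicator_of_mem (h3.2 ⟨ht1, ht.2⟩), indicator_of_mem (mem_Ioi.2 ht1)]
        · rw [hf, indicator_of_notMem (fun hh => ht1 (h3.1 hh).1),
            indicator_of_notMem (fun hh => ht1 (mem_Ioi.1 hh))]
      rw [setIntegral_congr_fun measurableSet_Ioo hval]
      by_cases ht1 : 1 < t
      · simp only [indicator_of_mem (mem_Ioi.2 ht1), hG]
        -- the truncation at `t > 1` is harmless since `g` vanishes at exit distance above `1`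
        refine (setIntegral_eq_of_subset_of_forall_sdiff_eq_zero (measurableSet_curveTimes _)
          (fun s hs => ((hIoo s).1 hs).1) fun s hs => ?_).symm
        obtain ⟨h1, h2, -⟩ := back_point h hy.1 hs.1.1 hs.1.2
        refine hg0 _ h1 ?_
        rw [h2, ENNReal.one_lt_ofReal]
        have : ¬ s < t := fun hh => hs.2 ((hIoo s).2 ⟨hs.1, hh⟩)
        linarith
      · simp [indicator_of_notMem (fun hh => ht1 (mem_Ioi.1 hh) : t ∉ Ioi (1 : ℝ))]
    rw [setIntegral_congr_fun (measurableSet_gammaP h hΩ) hin]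
    by_cases ht1 : t ∈ Ioi (1 : ℝ)
    · simp only [indicator_of_mem ht1]
    · simp only [indicator_of_notMem ht1, integral_zero]
  have hI : Ioo (0 : ℝ) 2 ∩ Ioi 1 = Ioo 1 2 := by
    ext t; simp only [mem_inter_iff, mem_Ioo, mem_Ioi]
    constructor
    · rintro ⟨⟨_, h2⟩, h3⟩; exact ⟨h3, h2⟩
    · rintro ⟨h1, h2⟩; exact ⟨⟨by linarith, h2⟩, h1⟩
  rw [hL, hR2, add_zero, setIntegral_congr_fun measurableSet_Ioo hR1,
    setIntegral_indicator measurableSet_Ioi, hI, setIntegral_const] at hmain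
  rw [hmain]
  simp [measureReal_def]
  norm_num

/-- The functions `exitWeight * orbitInt f` and `f` have the same integrals over `{τ₊ < ∞}` and
along each curve ending on `Γ₊`. The latter holds for Bochner integrals without integrability of
`f` along the curve, where both sides are zero. -/
theorem outgoing_integral (h : IsContFlow Φ) (hΩ : IsOpen Ω) {μ ν : Measure (Fin N → ℝ)}
    [SFinite μ] (hμ : ∀ r, MeasurePreserving (fun x => Φ x r) μ μ) (hb : OutBeals Ω Φ μ ν)
    {f : (Fin N → ℝ) → ℝ} (hf : Integrable f (μ.restrict Ω)) :
    ∫ x in {x ∈ Ω | tauP Ω Φ x < ⊤}, f x ∂μ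
      = ∫ y in GammaP Ω Φ, curveInt (fun s => f (Φ y (-s))) (tauM Ω Φ y) ∂ν := by
  obtain ⟨h1, h2⟩ := integral_concentrate h hΩ hμ hf
  rw [← h2, integral_of_near_exit h hΩ hb h1 fun x _ hx => by
    rw [exitWeight_eq_zero hx, zero_mul]]
  refine setIntegral_congr_fun (measurableSet_gammaP h hΩ) fun y hy => ?_
  rw [gammaP_eq h hΩ] at hy
  have hval : ∀ s ∈ curveTimes (tauM Ω Φ y),
      exitWeight Ω Φ (Φ y (-s)) * orbitInt Ω Φ f (Φ y (-s))
      = exitWeight Ω Φ (Φ y (-s)) * curveInt (fun s => f (Φ y (-s))) (tauM Ω Φ y) :=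
    fun s hs => by rw [orbitInt_back h hΩ f hy.1 hs]
  have hw := curveInt_exitWeight h hy.1 hy.2
  change ∫ s in curveTimes (tauM Ω Φ y), exitWeight Ω Φ (Φ y (-s)) = 1 at hw
  change ∫ s in curveTimes (tauM Ω Φ y),
    exitWeight Ω Φ (Φ y (-s)) * orbitInt Ω Φ f (Φ y (-s)) = _
  rw [setIntegral_congr_fun (measurableSet_curveTimes _) hval, integral_mul_const, hw, one_mul]

/-- `τ₋ = ∞` holds at one point of an orbit in `Ω` exactly when it holds at its exit point, so
this is `outgoing_integral` for the restriction of `f` to `{τ₋ = ∞}`. -/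
theorem outgoing_integral_top (h : IsContFlow Φ) (hΩ : IsOpen Ω) {μ ν : Measure (Fin N → ℝ)}
    [SFinite μ] (hμ : ∀ r, MeasurePreserving (fun x => Φ x r) μ μ) (hb : OutBeals Ω Φ μ ν)
    {f : (Fin N → ℝ) → ℝ} (hf : Integrable f (μ.restrict Ω)) :
    ∫ x in {x ∈ Ω | tauP Ω Φ x < ⊤ ∧ tauM Ω Φ x = ⊤}, f x ∂μ
      = ∫ y in {y ∈ GammaP Ω Φ | tauM Ω Φ y = ⊤}, curveInt (fun s => f (Φ y (-s))) ⊤ ∂ν := by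
  set A : Set (Fin N → ℝ) := {x | tauM Ω Φ x = ⊤} with hA
  have hAm : MeasurableSet A := measurable_tauM h hΩ (measurableSet_singleton ⊤)
  have h1 := outgoing_integral h hΩ hμ hb (hf.indicator hAm)
  rw [setIntegral_indicator hAm] at h1
  have hs1 : {x ∈ Ω | tauP Ω Φ x < ⊤} ∩ A
      = {x ∈ Ω | tauP Ω Φ x < ⊤ ∧ tauM Ω Φ x = ⊤} := by
    ext x; simp only [hA, mem_inter_iff, mem_ofPred_eq, and_assoc]
  have hs2 : {y ∈ GammaP Ω Φ | tauM Ω Φ y = ⊤} = GammaP Ω Φ ∩ A := rfl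
  rw [hs1] at h1
  rw [h1, hs2, ← setIntegral_indicator hAm]
  refine setIntegral_congr_fun (measurableSet_gammaP h hΩ) fun y hy => ?_
  rw [gammaP_eq h hΩ] at hy
  have hmem : ∀ s ∈ curveTimes (tauM Ω Φ y), (Φ y (-s) ∈ A ↔ y ∈ A) := by
    intro s hs
    obtain ⟨-, -, h3⟩ := back_point h hy.1 hs.1 hs.2
    simp only [hA, mem_ofPred_eq]
    rw [h3, ENNReal.add_eq_top]
    simp
  change ∫ s in curveTimes (tauM Ω Φ y), A.indicator f (Φ y (-s)) = _
  by_cases hyA : y ∈ A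
  · rw [indicator_of_mem hyA]
    have ht : tauM Ω Φ y = ⊤ := hyA
    rw [← ht]
    exact setIntegral_congr_fun (measurableSet_curveTimes _) fun s hs =>
      indicator_of_mem ((hmem s hs).2 hyA) f
  · rw [indicator_of_notMem hyA]
    exact setIntegral_eq_zero_of_forall_eq_zero fun s hs =>
      indicator_of_notMem (fun hh => hyA ((hmem s hs).1 hh)) f

theorem measurePreserving_flow (h : IsContFlow Φ) {μ : Measure (Fin N → ℝ)}
    (hinv : ∀ (A : Set (Fin N → ℝ)) (t : ℝ), MeasurableSet A →
      μ ((fun x => Φ x t) '' A) = μ A) (r : ℝ) :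
    MeasurePreserving (fun x => Φ x r) μ μ := by
  have hm : Measurable fun x => Φ x r :=
    (h.cont.comp (continuous_id.prodMk continuous_const)).measurable
  refine ⟨hm, Measure.ext fun A hA => ?_⟩
  rw [Measure.map_apply hm hA, ← hinv A (-r) hA]
  congr 1
  ext x
  constructor
  · intro hx
    exact ⟨Φ x r, hx, by simp [h.add, h.zero]⟩
  · rintro ⟨z, hz, rfl⟩
    simpa [h.add, h.zero] using hz

end Flow

theorem stmt_4
    {N : ℕ} (hN : 1 ≤ N) (κ : ℝ≥0) (hκ : 0 < κ)
    (F : (Fin N → ℝ) → (Fin N → ℝ)) (hF : LipschitzWith κ F)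
    (Φ : (Fin N → ℝ) → ℝ → (Fin N → ℝ))
    (hΦ0 : ∀ x, Φ x 0 = x)
    (hΦ' : ∀ x s, HasDerivAt (Φ x) (F (Φ x s)) s)
    (Ω : Set (Fin N → ℝ)) (hΩ : IsOpen Ω)
    (μ : Measure (Fin N → ℝ)) [IsFiniteMeasureOnCompacts μ]
    (hinv : ∀ (A : Set (Fin N → ℝ)) (t : ℝ), MeasurableSet A →
      μ ((fun x => Φ x t) '' A) = μ A)
    (μm μp : Measure (Fin N → ℝ))
    (hbeals : BealsProperty Ω Φ μ μm μp)
    (f : (Fin N → ℝ) → ℝ) (hf : Integrable f (μ.restrict Ω)) :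
    (∫ x in {x ∈ Ω | tauP Ω Φ x < ⊤}, f x ∂μ
        = ∫ y in GammaP Ω Φ, curveInt (fun s => f (Φ y (-s))) (tauM Ω Φ y) ∂μp) ∧
    (∫ x in {x ∈ Ω | tauM Ω Φ x < ⊤}, f x ∂μ
        = ∫ y in GammaM Ω Φ, curveInt (fun s => f (Φ y s)) (tauP Ω Φ y) ∂μm) ∧
    (∫ x in {x ∈ Ω | tauP Ω Φ x < ⊤ ∧ tauM Ω Φ x = ⊤}, f x ∂μ
        = ∫ y in {y ∈ GammaP Ω Φ | tauM Ω Φ y = ⊤},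
            curveInt (fun s => f (Φ y (-s))) ⊤ ∂μp) ∧
    (∫ x in {x ∈ Ω | tauM Ω Φ x < ⊤ ∧ tauP Ω Φ x = ⊤}, f x ∂μ
        = ∫ y in {y ∈ GammaM Ω Φ | tauP Ω Φ y = ⊤},
            curveInt (fun s => f (Φ y s)) ⊤ ∂μm) := by
  have h := isContFlow_of_ode hF hΦ0 hΦ'
  have hμ := measurePreserving_flow h hinv
  have hout : OutBeals Ω Φ μ μp := fun T hT g hg => (hbeals T hT g hg).1
  have hin := outBeals_rev hbeals
  have h1 := outgoing_integral h.rev hΩ (fun r => hμ (-r)) hin hf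
  have h2 := outgoing_integral_top h.rev hΩ (fun r => hμ (-r)) hin hf
  simp only [tauP_rev, tauM_rev, gammaP_rev, revFlow, neg_neg] at h1 h2
  exact ⟨outgoing_integral h hΩ hμ hout hf, h1, outgoing_integral_top h hΩ hμ hout hf, h2⟩

end
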